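/- For every τ ∈ ℍ and every z in a sufficiently small neighborhood of 0 one has ∑_{n≥0} (−1)^n U_{2n}(q) (πz)^{2n+1}/(2n+1)! = πz · exp(∑_{n≥1} B_{2n} E_{2n}(τ) (2πiz)^{2n} / (2n·(2n)!)). -/

import Mathlib

/-!
With `x = πz`, expanding the sines turns the left-hand side into the quotient of
`∑_j (-1)^j q^{j(j+1)/2} sin((2j+1)x)` by `∑_j (-1)^j (2j+1) q^{j(j+1)/2}`. Both `sin((2j+1)x)` and
`2j+1` change sign under `j ↦ -1-j` and satisfy a three-term recurrence
`S_{j+1} + S_{j-1} = t S_j`, with `t = 2cos(2x)` and `t = 2`, and for any such sequence the Jacobi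
triple product evaluates `∑_j (-1)^j q^{j(j+1)/2} S_j` as `S_0 ∏ (1 - qᵏ) ∏ (1 - t qᵏ + q²ᵏ)`; the
finite form of this identity, with Gaussian binomial coefficients, is an induction, and dominated
convergence does the rest. The left-hand side is therefore
`sin(x) ∏ (1 - 2cos(2x) qᵏ + q²ᵏ) / ∏ (1 - qᵏ)²`.

Now take logarithms of all factors. Euler's product for the sine and the values `ζ(2k)` produce
the constant terms `B_{2k}` of the Eisenstein series. For the other product put `X = 2πiz`: its
factors are `(1 - qᵏe^X)(1 - qᵏe^{-X})`, minus the logarithm is `∑_{n,m} 2 q^{nm} cosh(mX) / m`, and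
the coefficient of `X^{2k}/(2k)!` is the Lambert series `2 ∑_{n,m} m^{2k-1} q^{nm}`, which equals
`2 ∑ σ_{2k-1}(n) qⁿ`.
-/

open Complex Filter
open scoped Real

noncomputable section

/-- `q = e^{2πiτ}`. -/
def qq (τ : ℂ) : ℂ := Complex.exp (2 * (π : ℂ) * Complex.I * τ)

/-- The normalized Eisenstein series `E_{2k}(τ) = 1 − (4k/B_{2k}) ∑_{n≥1} σ_{2k−1}(n) qⁿ`. -/
def Eser (k : ℕ) (τ : ℂ) : ℂ :=
  1 - (4 * k / ((bernoulli (2 * k) : ℚ) : ℂ)) *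
    ∑' n : ℕ, ((ArithmeticFunction.sigma (2 * k - 1)) (n + 1) : ℂ) * qq τ ^ (n + 1)

/-- Ramanujan's series `U_{2n}(q)`:
numerator `∑_{j≥0} (−1)^j (2j+1)^{2n+1} q^{j(j+1)/2}` divided by
denominator `∑_{j≥0} (−1)^j (2j+1) q^{j(j+1)/2}`. -/
def Uram (n : ℕ) (q : ℂ) : ℂ :=
  (∑' j : ℕ, (-1 : ℂ) ^ j * ((2 * j + 1 : ℕ) : ℂ) ^ (2 * n + 1) * q ^ (j * (j + 1) / 2)) /
    (∑' j : ℕ, (-1 : ℂ) ^ j * ((2 * j + 1 : ℕ) : ℂ) * q ^ (j * (j + 1) / 2))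

section FiniteTripleProduct

variable {K : Type*} [Field K] {q : K}

/-- The `q`-Pochhammer symbol `(q; q)_n = ∏_{k=1}^n (1 - q^k)`. -/
def qPoch (q : K) (n : ℕ) : K := ∏ k ∈ Finset.range n, (1 - q ^ (k + 1))

/-- The reciprocal `1 / (q; q)_m` at an integer index, with the usual convention that it vanishes
for `m < 0`; the recursion in `m` then holds at every integer. -/
def qPochInv (q : K) : ℤ → K
  | (n : ℕ) => (qPoch q n)⁻¹
  | .negSucc _ => 0

/-- The coefficient `(-1)^j q^{j(j+1)/2}` of the theta series, for an arbitrary integer `j`. -/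
def thetaCoeff (q : K) (j : ℤ) : K := (-1) ^ j * q ^ (j * (j + 1) / 2)

/-- The coefficient of the finite triple product of order `n`: the theta coefficient times the
Gaussian binomial `[2n+1, n-j]_q`. -/
def finThetaCoeff (q : K) (n : ℕ) (j : ℤ) : K :=
  thetaCoeff q j * (qPoch q (2 * n + 1) * qPochInv q (n - j) * qPochInv q (n + 1 + j))

lemma qPoch_succ (q : K) (n : ℕ) : qPoch q (n + 1) = qPoch q n * (1 - q ^ (n + 1)) :=
  Finset.prod_range_succ _ _

lemma qPochInv_natCast (q : K) (n : ℕ) : qPochInv q n = (qPoch q n)⁻¹ := rfl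

lemma qPochInv_of_neg (q : K) {m : ℤ} (hm : m < 0) : qPochInv q m = 0 := by
  obtain ⟨n, rfl⟩ := Int.eq_negSucc_of_lt_zero hm
  rfl

lemma qPochInv_sub_one (hq1 : ∀ k : ℕ, q ^ (k + 1) ≠ 1) (m : ℤ) :
    qPochInv q (m - 1) = (1 - q ^ m) * qPochInv q m := by
  rcases lt_trichotomy m 0 with hm | rfl | hm
  · rw [qPochInv_of_neg q hm, qPochInv_of_neg q (by lia), mul_zero]
  · rw [qPochInv_of_neg q (by lia), zpow_zero, sub_self, zero_mul]
  · obtain ⟨n, rfl⟩ : ∃ n : ℕ, m = (n + 1 : ℕ) := ⟨(m - 1).toNat, by lia⟩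
    have hn : 1 - q ^ (n + 1) ≠ 0 := sub_ne_zero.mpr (hq1 n).symm
    rw [show ((n + 1 : ℕ) : ℤ) - 1 = n by lia, qPochInv_natCast, qPochInv_natCast, qPoch_succ,
      zpow_natCast, mul_inv_rev, mul_inv_cancel_left₀ hn]

lemma thetaCoeff_natCast (q : K) (j : ℕ) :
    thetaCoeff q j = (-1) ^ j * q ^ (j * (j + 1) / 2) := by
  rw [thetaCoeff, zpow_natCast]
  exact_mod_cast congrArg _ (zpow_natCast q (j * (j + 1) / 2))

lemma thetaCoeff_add_one (hq0 : q ≠ 0) (j : ℤ) :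
    thetaCoeff q (j + 1) = -q ^ (j + 1) * thetaCoeff q j := by
  have hexp : (j + 1) * (j + 1 + 1) / 2 = j * (j + 1) / 2 + (j + 1) := by
    rw [← Int.add_mul_ediv_right _ _ two_ne_zero]
    ring_nf
  rw [thetaCoeff, thetaCoeff, hexp, zpow_add₀ hq0 (j * (j + 1) / 2),
    zpow_add_one₀ (neg_ne_zero.mpr one_ne_zero) j]
  ring

lemma thetaCoeff_neg_add_one (q : K) (j : ℤ) : thetaCoeff q (-(j + 1)) = -thetaCoeff q j := by
  have hsign : ((-1 : K)) ^ (-(j + 1)) = -(-1) ^ j := by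
    rw [zpow_neg, ← inv_zpow, inv_neg_one, zpow_add_one₀ (neg_ne_zero.mpr one_ne_zero)]
    ring
  rw [thetaCoeff, thetaCoeff, hsign, show -(j + 1) * (-(j + 1) + 1) = j * (j + 1) by ring]
  ring

lemma finThetaCoeff_zero (hq : q ≠ 1) (j : ℤ) :
    finThetaCoeff q 0 j = if j = 0 then 1 else if j = -1 then -1 else 0 := by
  have hp0 : qPoch q 0 = 1 := Finset.prod_range_zero _
  have hp1 : qPoch q 1 ≠ 0 := by simpa [qPoch, sub_eq_zero] using hq.symm
  split_ifs with h0 h1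
  · subst h0
    simp [finThetaCoeff, thetaCoeff, qPochInv, hp0, hp1]
  · subst h1
    simp [finThetaCoeff, thetaCoeff, qPochInv, hp0, hp1]
  · rcases lt_or_ge j 0 with hj | hj
    · rw [finThetaCoeff, qPochInv_of_neg q (m := _ + 1 + j) (by lia), mul_zero, mul_zero]
    · rw [finThetaCoeff, qPochInv_of_neg q (m := _ - j) (by lia), mul_zero, zero_mul, mul_zero]

lemma support_finThetaCoeff_subset (q : K) (n : ℕ) :
    Function.support (finThetaCoeff q n) ⊆ Set.Icc (-(n + 1) : ℤ) n := by
  intro j hj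
  by_contra hout
  refine hj ?_
  rcases le_or_gt j n with hle | hgt
  · have hlt : (n : ℤ) + 1 + j < 0 := by
      rw [Set.mem_Icc] at hout
      lia
    rw [finThetaCoeff, qPochInv_of_neg q hlt, mul_zero, mul_zero]
  · rw [finThetaCoeff, qPochInv_of_neg q (sub_neg.mpr hgt), mul_zero, zero_mul, mul_zero]

lemma finThetaCoeff_succ (hq0 : q ≠ 0) (hq1 : ∀ k : ℕ, q ^ (k + 1) ≠ 1) (n : ℕ) (j : ℤ) :
    finThetaCoeff q (n + 1) j = (1 + q ^ (2 * (n + 1))) * finThetaCoeff q n j -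
      q ^ (n + 1) * (finThetaCoeff q n (j - 1) + finThetaCoeff q n (j + 1)) := by
  have hqj : q ^ j ≠ 0 := zpow_ne_zero j hq0
  have hA : qPochInv q (n - j) = (1 - q ^ n * q / q ^ j) * qPochInv q (n + 1 - j) := by
    rw [show (n : ℤ) - j = n + 1 - j - 1 by ring, qPochInv_sub_one hq1, zpow_sub₀ hq0,
      zpow_add_one₀ hq0, zpow_natCast]
  have hA' : qPochInv q (n - (j + 1)) = (1 - q ^ n / q ^ j) * qPochInv q (n - j) := by
    rw [show (n : ℤ) - (j + 1) = n - j - 1 by ring, qPochInv_sub_one hq1, zpow_sub₀ hq0,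
      zpow_natCast]
  have hB : qPochInv q (n + 1 + j) = (1 - q ^ n * q ^ 2 * q ^ j) * qPochInv q (n + 2 + j) := by
    rw [show (n : ℤ) + 1 + j = n + 2 + j - 1 by ring, qPochInv_sub_one hq1, zpow_add₀ hq0,
      zpow_add₀ hq0, zpow_natCast, zpow_ofNat]
  have hB' : qPochInv q (n + 1 + (j - 1)) = (1 - q ^ n * q * q ^ j) * qPochInv q (n + 1 + j) := by
    rw [show (n : ℤ) + 1 + (j - 1) = n + 1 + j - 1 by ring, qPochInv_sub_one hq1, zpow_add₀ hq0,
      zpow_add_one₀ hq0, zpow_natCast]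
  have hθ : thetaCoeff q (j + 1) = -(q ^ j * q) * thetaCoeff q j := by
    rw [thetaCoeff_add_one hq0, zpow_add_one₀ hq0]
  have hθ' : thetaCoeff q j = -q ^ j * thetaCoeff q (j - 1) := by
    simpa using thetaCoeff_add_one hq0 (j - 1)
  have hP : qPoch q (2 * (n + 1) + 1) =
      qPoch q (2 * n + 1) * (1 - (q ^ n) ^ 2 * q ^ 2) * (1 - (q ^ n) ^ 2 * q ^ 3) := by
    rw [show 2 * (n + 1) + 1 = 2 * n + 1 + 1 + 1 by ring, qPoch_succ, qPoch_succ]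
    ring
  have hindex : ((n + 1 : ℕ) : ℤ) - j = n + 1 - j ∧ ((n + 1 : ℕ) : ℤ) + 1 + j = n + 2 + j ∧
      (n : ℤ) - (j - 1) = n + 1 - j ∧ (n : ℤ) + 1 + (j + 1) = n + 2 + j := by lia
  obtain ⟨h₁, h₂, h₃, h₄⟩ := hindex
  -- Every term is now a multiple of `qPochInv q (n + 1 - j) * qPochInv q (n + 2 + j)`, which leaves
  -- a polynomial identity in `q`, `q ^ n` and `q ^ j`.
  simp only [finThetaCoeff, h₁, h₂, h₃, h₄, hP, hA', hA, hB', hB, hθ, hθ']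
  field_simp
  ring

lemma hasFiniteSupport_finThetaCoeff (q : K) (n : ℕ) : (finThetaCoeff q n).HasFiniteSupport :=
  (Set.finite_Icc _ _).subset (support_finThetaCoeff_subset q n)

lemma finsum_shift_add_shift_mul {R : Type*} [NonUnitalNonAssocSemiring R] {a : ℤ → R}
    (ha : a.HasFiniteSupport) (S : ℤ → R) :
    ∑ᶠ j, (a (j - 1) + a (j + 1)) * S j = ∑ᶠ j, a j * (S (j + 1) + S (j - 1)) := by
  have hdown : ∑ᶠ j, a (j - 1) * S j = ∑ᶠ j, a j * S (j + 1) := by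
    simpa using finsum_comp_equiv (Equiv.subRight (1 : ℤ)) (f := fun j => a j * S (j + 1))
  have hup : ∑ᶠ j, a (j + 1) * S j = ∑ᶠ j, a j * S (j - 1) := by
    simpa using finsum_comp_equiv (Equiv.addRight (1 : ℤ)) (f := fun j => a j * S (j - 1))
  have ha_down : (fun j => a (j - 1)).HasFiniteSupport :=
    ha.comp_of_injective (sub_left_injective (b := 1))
  have ha_up : (fun j => a (j + 1)).HasFiniteSupport :=
    ha.comp_of_injective (add_left_injective 1)
  simp only [add_mul, mul_add]
  rw [finsum_add_distrib (ha_down.fun_mul_left S) (ha_up.fun_mul_left S), hdown, hup,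
    finsum_add_distrib (by fun_prop) (by fun_prop)]

theorem finite_jacobi_triple_product (hq0 : q ≠ 0) (hq1 : ∀ k : ℕ, q ^ (k + 1) ≠ 1) {S : ℤ → K}
    {t : K} (hS : ∀ j, S (j + 1) + S (j - 1) = t * S j) (n : ℕ) :
    ∑ᶠ j, finThetaCoeff q n j * S j =
      (S 0 - S (-1)) * ∏ k ∈ Finset.range n, (1 - t * q ^ (k + 1) + q ^ (2 * (k + 1))) := by
  induction n with
  | zero =>
    have hq : q ≠ 1 := by simpa using hq1 0
    have hsupp : (fun j => finThetaCoeff q 0 j * S j).support ⊆ ({0, -1} : Finset ℤ) := by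
      intro j hj
      simp only [finThetaCoeff_zero hq, Function.mem_support] at hj
      grind
    rw [finsum_eq_sum_of_support_subset _ hsupp, Finset.sum_pair (by decide),
      finThetaCoeff_zero hq, finThetaCoeff_zero hq, if_pos rfl, if_neg (by decide), if_pos rfl,
      Finset.prod_range_zero]
    ring
  | succ n ih =>
    set a := finThetaCoeff q n
    have ha : a.HasFiniteSupport := hasFiniteSupport_finThetaCoeff q n
    have hnbr : (fun j => a (j - 1) + a (j + 1)).HasFiniteSupport :=
      (ha.comp_of_injective (sub_left_injective (b := 1))).fun_add
        (ha.comp_of_injective (add_left_injective 1))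
    have hshift : ∑ᶠ j, (a (j - 1) + a (j + 1)) * S j = t * ∑ᶠ j, a j * S j := by
      rw [finsum_shift_add_shift_mul ha, mul_finsum]
      exact finsum_congr fun j => by rw [hS, mul_left_comm]
    calc ∑ᶠ j, finThetaCoeff q (n + 1) j * S j
        = ∑ᶠ j, ((1 + q ^ (2 * (n + 1))) * (a j * S j) -
            q ^ (n + 1) * ((a (j - 1) + a (j + 1)) * S j)) :=
          finsum_congr fun j => by rw [finThetaCoeff_succ hq0 hq1]; ring
      _ = (1 + q ^ (2 * (n + 1))) * ∑ᶠ j, a j * S j -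
            q ^ (n + 1) * (t * ∑ᶠ j, a j * S j) := by
          rw [finsum_sub_distrib (by fun_prop) ((hnbr.fun_mul_left S).fun_mul_right _),
            ← mul_finsum, ← mul_finsum, hshift]
      _ = _ := by rw [ih, Finset.prod_range_succ]; ring

end FiniteTripleProduct

section InfiniteTripleProduct

variable {𝕜 : Type*} [NormedField 𝕜] {q t : 𝕜}

/-- Euler's product `(q; q)_∞ = ∏_{k≥1} (1 - q^k)`. -/
def eulerProd (q : 𝕜) : 𝕜 := ∏' k : ℕ, (1 - q ^ (k + 1))

/-- The product `∏_{k≥1} (1 - t q^k + q^{2k})`, that is, `∏_{k≥1} (1 - w q^k) (1 - w⁻¹ q^k)` for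
`t = w + w⁻¹`. -/
def quadProd (q t : 𝕜) : 𝕜 := ∏' k : ℕ, (1 - t * q ^ (k + 1) + q ^ (2 * (k + 1)))

lemma pow_succ_ne_one_of_norm_lt_one (hq : ‖q‖ < 1) (k : ℕ) : q ^ (k + 1) ≠ 1 := by
  intro h
  have hlt : ‖q ^ (k + 1)‖ < 1 := by
    rw [norm_pow]
    exact pow_lt_one₀ (norm_nonneg q) hq k.succ_ne_zero
  rw [h, norm_one] at hlt
  exact hlt.false

lemma summable_norm_pow_succ (hq : ‖q‖ < 1) : Summable fun k : ℕ => ‖q ^ (k + 1)‖ := by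
  simpa only [norm_pow] using
    (summable_nat_add_iff 1).mpr (summable_geometric_of_lt_one (norm_nonneg q) hq)

lemma norm_le_of_three_term_recurrence {S : ℕ → 𝕜}
    (hS : ∀ j, S (j + 2) = t * S (j + 1) - S j) (j : ℕ) :
    ‖S j‖ ≤ (‖S 0‖ + ‖S 1‖) * (‖t‖ + 1) ^ j := by
  set C := ‖S 0‖ + ‖S 1‖ with hC
  have hr : 1 ≤ ‖t‖ + 1 := le_add_of_nonneg_left (norm_nonneg t)
  induction j using Nat.twoStepInduction with
  | zero => simp [hC]
  | one =>
    calc ‖S 1‖ ≤ C := le_add_of_nonneg_left (norm_nonneg _)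
      _ ≤ C * (‖t‖ + 1) ^ 1 := by
        rw [pow_one]
        exact le_mul_of_one_le_right (by positivity) hr
  | more j ih ih' =>
    calc ‖S (j + 2)‖ ≤ ‖t‖ * ‖S (j + 1)‖ + ‖S j‖ := by
          rw [hS, ← norm_mul]
          exact norm_sub_le _ _
      _ ≤ ‖t‖ * (C * (‖t‖ + 1) ^ (j + 1)) + C * (‖t‖ + 1) ^ (j + 1) := by
          gcongr
          exact ih.trans (by gcongr; exact j.le_succ)
      _ = C * (‖t‖ + 1) ^ (j + 2) := by ring

lemma summable_norm_thetaCoeff_mul_pow (hq0 : q ≠ 0) (hq : ‖q‖ < 1) (r : ℝ) :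
    Summable fun j : ℕ => ‖thetaCoeff q j‖ * r ^ j := by
  have hratio : Tendsto (fun j : ℕ => ‖q‖ ^ (j + 1) * |r|) atTop (nhds 0) := by
    simpa using ((tendsto_add_atTop_iff_nat 1).mpr
      (tendsto_pow_atTop_nhds_zero_of_lt_one (norm_nonneg q) hq)).mul_const |r|
  refine summable_of_ratio_norm_eventually_le (r := 1 / 2) (by norm_num) ?_
  filter_upwards [hratio.eventually_le_const (show (0 : ℝ) < 1 / 2 by norm_num)] with j hj
  have hstep : ‖thetaCoeff q (j + 1 : ℕ)‖ = ‖q‖ ^ (j + 1) * ‖thetaCoeff q j‖ := by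
    rw [Nat.cast_add_one, thetaCoeff_add_one hq0, norm_mul, norm_neg, norm_zpow]
    norm_cast
  calc ‖‖thetaCoeff q (j + 1 : ℕ)‖ * r ^ (j + 1)‖
      = ‖q‖ ^ (j + 1) * |r| * ‖‖thetaCoeff q j‖ * r ^ j‖ := by
        rw [hstep, norm_mul, norm_mul, norm_mul, norm_pow, norm_pow r (j + 1), norm_pow r j,
          norm_norm, Real.norm_eq_abs r]
        ring
    _ ≤ 1 / 2 * ‖‖thetaCoeff q j‖ * r ^ j‖ := by gcongr

lemma summable_norm_thetaCoeff_mul (hq0 : q ≠ 0) (hq : ‖q‖ < 1) {S : ℤ → 𝕜}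
    (hS : ∀ j, S (j + 1) + S (j - 1) = t * S j) :
    Summable fun j => ‖thetaCoeff q j * S j‖ := by
  have hpos (j : ℕ) : ‖S j‖ ≤ (‖S 0‖ + ‖S 1‖) * (‖t‖ + 1) ^ j := by
    refine norm_le_of_three_term_recurrence (S := fun j : ℕ => S j) (fun j => ?_) j
    have h := hS (j + 1)
    push_cast
    grind
  have hneg (j : ℕ) : ‖S (-(j + 1))‖ ≤ (‖S (-1)‖ + ‖S (-2)‖) * (‖t‖ + 1) ^ j := by
    refine norm_le_of_three_term_recurrence (S := fun j : ℕ => S (-(j + 1))) (fun j => ?_) j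
    have h := hS (-(j + 2))
    push_cast
    grind
  have hbound (C : ℝ) : Summable fun j : ℕ => ‖thetaCoeff q j‖ * (C * (‖t‖ + 1) ^ j) := by
    simpa only [mul_left_comm] using
      (summable_norm_thetaCoeff_mul_pow hq0 hq (‖t‖ + 1)).mul_left C
  simp only [norm_mul]
  refine .of_nat_of_neg_add_one
    ((hbound (‖S 0‖ + ‖S 1‖)).of_nonneg_of_le (fun _ => by positivity) fun j => ?_)
    ((hbound (‖S (-1)‖ + ‖S (-2)‖)).of_nonneg_of_le (fun _ => by positivity) fun j => ?_)
  · gcongr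
    exact hpos j
  · rw [thetaCoeff_neg_add_one, norm_neg]
    gcongr
    exact hneg j

variable [CompleteSpace 𝕜]

lemma multipliable_quadProd (hq : ‖q‖ < 1) (t : 𝕜) :
    Multipliable fun k : ℕ => 1 - t * q ^ (k + 1) + q ^ (2 * (k + 1)) := by
  have hsum : Summable fun k : ℕ => ‖-t * q ^ (k + 1) + q ^ (2 * (k + 1))‖ := by
    refine ((summable_norm_pow_succ hq).mul_left (‖t‖ + 1)).of_nonneg_of_le
      (fun _ => norm_nonneg _) fun k => ?_
    calc ‖-t * q ^ (k + 1) + q ^ (2 * (k + 1))‖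
        ≤ ‖t‖ * ‖q ^ (k + 1)‖ + ‖q ^ (2 * (k + 1))‖ := by
          rw [← norm_neg t, ← norm_mul]
          exact norm_add_le _ _
      _ ≤ ‖t‖ * ‖q ^ (k + 1)‖ + ‖q ^ (k + 1)‖ := by
          rw [norm_pow q (2 * (k + 1)), norm_pow q (k + 1)]
          gcongr ‖t‖ * ‖q‖ ^ (k + 1) + ?_
          exact pow_le_pow_of_le_one (norm_nonneg q) hq.le (Nat.le_mul_of_pos_left _ two_pos)
      _ = (‖t‖ + 1) * ‖q ^ (k + 1)‖ := by ring
  exact (multipliable_one_add_of_summable hsum).congr fun k => by ring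

lemma tendsto_qPoch (hq : ‖q‖ < 1) : Tendsto (qPoch q) atTop (nhds (eulerProd q)) := by
  have hmul : Multipliable fun k : ℕ => 1 - q ^ (k + 1) := by
    simpa only [sub_eq_add_neg] using multipliable_one_add_of_summable
      (f := fun k : ℕ => -q ^ (k + 1)) (by simpa only [norm_neg] using summable_norm_pow_succ hq)
  exact hmul.hasProd.tendsto_prod_nat

lemma eulerProd_ne_zero (hq : ‖q‖ < 1) : eulerProd q ≠ 0 := by
  have h := tprod_one_add_ne_zero_of_summable (f := fun k : ℕ => -q ^ (k + 1))
    (fun k => by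
      simpa only [← sub_eq_add_neg] using
        sub_ne_zero.mpr (pow_succ_ne_one_of_norm_lt_one hq k).symm)
    (by simpa only [norm_neg] using summable_norm_pow_succ hq)
  simpa only [eulerProd, sub_eq_add_neg] using h

lemma tendsto_qPochInv (hq : ‖q‖ < 1) :
    Tendsto (qPochInv q) atTop (nhds (eulerProd q)⁻¹) := by
  rw [← Nat.map_cast_int_atTop, tendsto_map'_iff]
  exact (tendsto_qPoch hq).inv₀ (eulerProd_ne_zero hq)

lemma tendsto_finThetaCoeff (hq : ‖q‖ < 1) (j : ℤ) :
    Tendsto (fun n => finThetaCoeff q n j) atTop (nhds (thetaCoeff q j * (eulerProd q)⁻¹)) := by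
  have hcast : Tendsto (fun n : ℕ => (n : ℤ)) atTop atTop := tendsto_natCast_atTop_atTop
  have hnum : Tendsto (fun n => qPoch q (2 * n + 1)) atTop (nhds (eulerProd q)) :=
    (tendsto_qPoch hq).comp (tendsto_atTop_mono (fun n => show n ≤ 2 * n + 1 by lia) tendsto_id)
  have hleft : Tendsto (fun n : ℕ => qPochInv q (n - j)) atTop (nhds (eulerProd q)⁻¹) :=
    (tendsto_qPochInv hq).comp (tendsto_atTop_add_const_right _ (-j) hcast)
  have hright : Tendsto (fun n : ℕ => qPochInv q (n + 1 + j)) atTop (nhds (eulerProd q)⁻¹) :=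
    (tendsto_qPochInv hq).comp
      (tendsto_atTop_add_const_right _ j (tendsto_atTop_add_const_right _ 1 hcast))
  have hlim := ((hnum.mul hleft).mul hright).const_mul (thetaCoeff q j)
  rwa [mul_inv_cancel₀ (eulerProd_ne_zero hq), one_mul] at hlim

lemma exists_norm_qPochInv_le (hq : ‖q‖ < 1) : ∃ M, ∀ m, ‖qPochInv q m‖ ≤ M := by
  obtain ⟨M, hM⟩ := (Metric.isBounded_range_of_tendsto _
    ((tendsto_qPoch hq).inv₀ (eulerProd_ne_zero hq))).exists_norm_le
  refine ⟨M, fun m => ?_⟩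
  rcases lt_or_ge m 0 with hm | hm
  · rw [qPochInv_of_neg q hm, norm_zero]
    exact (norm_nonneg _).trans (hM _ ⟨0, rfl⟩)
  · lift m to ℕ using hm
    exact hM _ ⟨m, rfl⟩

lemma exists_norm_finThetaCoeff_le (hq : ‖q‖ < 1) :
    ∃ M, ∀ n j, ‖finThetaCoeff q n j‖ ≤ M * ‖thetaCoeff q j‖ := by
  obtain ⟨M, hM⟩ := (Metric.isBounded_range_of_tendsto _ (tendsto_qPoch hq)).exists_norm_le
  obtain ⟨M', hM'⟩ := exists_norm_qPochInv_le hq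
  refine ⟨M * M' * M', fun n j => ?_⟩
  have hM0 : 0 ≤ M := (norm_nonneg _).trans (hM _ ⟨0, rfl⟩)
  have hM0' : 0 ≤ M' := (norm_nonneg _).trans (hM' 0)
  rw [finThetaCoeff, norm_mul, norm_mul, norm_mul, mul_comm]
  gcongr
  exacts [hM _ ⟨_, rfl⟩, hM' _, hM' _]

/-- Writing the triple product as a pairing with a solution `S` of a three-term recurrence covers
`S j = sin ((2j+1)x)` together with its degenerate limit `S j = 2j+1`. -/
theorem hasSum_jacobi_triple_product (hq0 : q ≠ 0) (hq : ‖q‖ < 1) {S : ℤ → 𝕜}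
    (hS : ∀ j, S (j + 1) + S (j - 1) = t * S j) :
    HasSum (fun j => thetaCoeff q j * S j) (eulerProd q * ((S 0 - S (-1)) * quadProd q t)) := by
  have hsum := summable_norm_thetaCoeff_mul hq0 hq hS
  obtain ⟨M, hM⟩ := exists_norm_finThetaCoeff_le hq
  have hlim_sum : Tendsto (fun n => ∑' j, finThetaCoeff q n j * S j) atTop
      (nhds (∑' j, thetaCoeff q j * (eulerProd q)⁻¹ * S j)) := by
    refine tendsto_tsum_of_dominated_convergence (hsum.mul_left M)
      (fun j => (tendsto_finThetaCoeff hq j).mul_const (S j)) (.of_forall fun n j => ?_)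
    rw [norm_mul, norm_mul, ← mul_assoc]
    gcongr
    exact hM n j
  have hlim_prod : Tendsto (fun n => ∑' j, finThetaCoeff q n j * S j) atTop
      (nhds ((S 0 - S (-1)) * quadProd q t)) := by
    refine (((multipliable_quadProd hq t).hasProd.tendsto_prod_nat).const_mul _).congr fun n => ?_
    rw [← finite_jacobi_triple_product hq0 (pow_succ_ne_one_of_norm_lt_one hq) hS,
      tsum_eq_finsum ((hasFiniteSupport_finThetaCoeff q n).fun_mul_left S)]
  have heq : (∑' j, thetaCoeff q j * S j) * (eulerProd q)⁻¹ = (S 0 - S (-1)) * quadProd q t := by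
    rw [← tendsto_nhds_unique hlim_sum hlim_prod, ← tsum_mul_right]
    exact tsum_congr fun j => by ring
  rw [← heq, mul_comm (∑' j, _), mul_inv_cancel_left₀ (eulerProd_ne_zero hq)]
  exact hsum.of_norm.hasSum

/-- For `S` odd about `-1/2` the terms at `j` and `-1-j` agree, so the bilateral series is twice
the unilateral one. -/
theorem hasSum_jacobi_triple_product_of_odd [CharZero 𝕜] (hq0 : q ≠ 0) (hq : ‖q‖ < 1) {S : ℤ → 𝕜}
    (hS : ∀ j, S (j + 1) + S (j - 1) = t * S j) (hodd : ∀ j, S (-(j + 1)) = -S j) :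
    HasSum (fun j : ℕ => thetaCoeff q j * S j) (eulerProd q * (S 0 * quadProd q t)) := by
  set f : ℤ → 𝕜 := fun j => thetaCoeff q j * S j
  have hZ : HasSum f (eulerProd q * ((S 0 - S (-1)) * quadProd q t)) :=
    hasSum_jacobi_triple_product hq0 hq hS
  have hN : HasSum (fun j : ℕ => f j) (∑' j : ℕ, f j) :=
    (hZ.summable.comp_injective Nat.cast_injective).hasSum
  have hreflect (j : ℕ) : f (-(j + 1)) = f j := by
    simp only [f, thetaCoeff_neg_add_one, hodd, neg_mul_neg]
  have htwo := (hN.of_nat_of_neg_add_one (by simpa only [hreflect] using hN)).unique hZ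
  rw [show S (-1) = -S 0 from hodd 0] at htwo
  have hhalf : ∑' j : ℕ, f j = eulerProd q * (S 0 * quadProd q t) :=
    mul_left_cancel₀ two_ne_zero (by linear_combination htwo)
  exact hhalf ▸ hN

end InfiniteTripleProduct

section Interchange

lemma hasSum_tsum_swap {ι κ E : Type*} [NormedAddCommGroup E] [CompleteSpace E]
    {f : ι × κ → E} (hf : Summable f) :
    HasSum (fun k => ∑' i, f (i, k)) (∑' p, f p) := by
  rw [← (Equiv.prodComm κ ι).tsum_eq]
  exact hf.prod_symm.hasSum.prod_fiberwise fun k => (hf.prod_symm.prod_factor k).hasSum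

lemma hasSum_tsum_mul_comp_mul {ι : Type*} {a : ℕ → ℂ} {e : ℕ → ℕ} {f : ℂ → ℂ} {g : ℝ → ℝ}
    (hf : ∀ z, HasSum (fun k => a k * z ^ e k) (f z))
    (hg : ∀ r, HasSum (fun k => ‖a k‖ * r ^ e k) (g r)) {c l : ι → ℂ} {x : ℂ}
    (hs : Summable fun i => ‖c i‖ * g (‖l i‖ * ‖x‖)) :
    HasSum (fun k => a k * (∑' i, c i * l i ^ e k) * x ^ e k) (∑' i, c i * f (l i * x)) := by
  set F : ι × ℕ → ℂ := fun p => c p.1 * (a p.2 * (l p.1 * x) ^ e p.2)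
  have hrow (i : ι) : HasSum (fun k => F (i, k)) (c i * f (l i * x)) := (hf _).mul_left _
  have hrow_norm (i : ι) : HasSum (fun k => ‖F (i, k)‖) (‖c i‖ * g (‖l i‖ * ‖x‖)) := by
    simpa only [F, norm_mul, norm_pow] using (hg (‖l i‖ * ‖x‖)).mul_left ‖c i‖
  have hF : Summable F := by
    refine .of_norm ((summable_prod_of_nonneg fun _ => norm_nonneg _).mpr
      ⟨fun i => (hrow_norm i).summable, ?_⟩)
    simpa only [(hrow_norm _).tsum_eq] using hs
  rw [(hF.hasSum.prod_fiberwise hrow).tsum_eq]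
  refine (hasSum_tsum_swap hF).congr_fun fun k => ?_
  rw [← tsum_mul_left, ← tsum_mul_right]
  exact tsum_congr fun i => by simp only [F, mul_pow]; ring

lemma summable_log_one_sub_series {ι : Type*} {u : ι → ℂ} (hu : Summable fun i => ‖u i‖)
    (hu1 : ∀ i, ‖u i‖ < 1) : Summable fun p : ι × ℕ => u p.1 ^ (p.2 + 1) / (p.2 + 1) := by
  have hrow (i : ι) : HasSum (fun n : ℕ => ‖u i ^ (n + 1) / ((n : ℂ) + 1)‖)
      (-Real.log (1 - ‖u i‖)) := by
    refine (Real.hasSum_pow_div_log_of_abs_lt_one (by simpa using hu1 i)).congr_fun fun n => ?_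
    rw [norm_div, norm_pow]
    exact_mod_cast congrArg _ (Complex.norm_natCast (n + 1))
  refine .of_norm ((summable_prod_of_nonneg fun _ => norm_nonneg _).mpr
    ⟨fun i => (hrow i).summable, ?_⟩)
  simp only [(hrow _).tsum_eq, sub_eq_add_neg (1 : ℝ)]
  exact (Real.summable_log_one_add_of_summable hu.neg).neg

lemma hasProd_one_sub_exp_tsum {ι : Type*} {u : ι → ℂ} (hu : Summable fun i => ‖u i‖)
    (hu1 : ∀ i, ‖u i‖ < 1) :
    HasProd (fun i => 1 - u i) (exp (-∑' p : ι × ℕ, u p.1 ^ (p.2 + 1) / (p.2 + 1))) := by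
  have hne (i : ι) : 1 - u i ≠ 0 :=
    sub_ne_zero.mpr fun h => by simpa [← h] using hu1 i
  have hrow (i : ι) : HasSum (fun n : ℕ => u i ^ (n + 1) / ((n : ℂ) + 1)) (-log (1 - u i)) :=
    Complex.hasSum_taylorSeries_neg_log' (hu1 i)
  have hlog := (summable_log_one_sub_series hu hu1).hasSum.prod_fiberwise hrow
  refine hlog.neg.cexp.congr_fun fun i => ?_
  rw [Function.comp_apply, neg_neg, Complex.exp_log (hne i)]

end Interchange

section ThetaQuotient

variable {q : ℂ}

lemma sin_odd_mul_recurrence (x : ℂ) (j : ℤ) :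
    sin ((2 * (j + 1 : ℤ) + 1) * x) + sin ((2 * (j - 1 : ℤ) + 1) * x) =
      2 * cos (2 * x) * sin ((2 * j + 1) * x) := by
  have hadd : (2 * ((j + 1 : ℤ) : ℂ) + 1) * x = (2 * j + 1) * x + 2 * x := by push_cast; ring
  have hsub : (2 * ((j - 1 : ℤ) : ℂ) + 1) * x = (2 * j + 1) * x - 2 * x := by push_cast; ring
  rw [hadd, hsub, sin_add, sin_sub]
  ring

lemma hasSum_thetaCoeff_mul_sin (hq0 : q ≠ 0) (hq : ‖q‖ < 1) (x : ℂ) :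
    HasSum (fun j : ℕ => thetaCoeff q j * sin ((2 * j + 1 : ℕ) * x))
      (eulerProd q * (sin x * quadProd q (2 * cos (2 * x)))) := by
  have hodd (j : ℤ) : sin ((2 * (-(j + 1) : ℤ) + 1) * x) = -sin ((2 * j + 1) * x) := by
    rw [← sin_neg]
    push_cast
    ring_nf
  simpa using hasSum_jacobi_triple_product_of_odd hq0 hq
    (S := fun j : ℤ => sin ((2 * j + 1) * x)) (sin_odd_mul_recurrence x) hodd

lemma hasSum_thetaCoeff_mul_odd (hq0 : q ≠ 0) (hq : ‖q‖ < 1) :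
    HasSum (fun j : ℕ => thetaCoeff q j * (2 * j + 1 : ℕ)) (eulerProd q * quadProd q 2) := by
  simpa using hasSum_jacobi_triple_product_of_odd hq0 hq (t := 2)
    (S := fun j : ℤ => 2 * (j : ℂ) + 1) (fun j => by push_cast; ring) (fun j => by push_cast; ring)

lemma summable_norm_thetaCoeff_mul_sinh (hq0 : q ≠ 0) (hq : ‖q‖ < 1) {r : ℝ} (hr : 0 ≤ r) :
    Summable fun j : ℕ => ‖thetaCoeff q j‖ * Real.sinh ((2 * j + 1 : ℕ) * r) := by
  have hsum := summable_norm_thetaCoeff_mul hq0 hq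
    (S := fun j : ℤ => sin ((2 * j + 1) * (r * I))) (sin_odd_mul_recurrence (r * I))
  refine (hsum.comp_injective Nat.cast_injective).congr fun j => ?_
  have harg : (2 * ((j : ℤ) : ℂ) + 1) * (r * I) = ((2 * j + 1 : ℕ) * r : ℝ) * I := by
    push_cast
    ring
  have hsinh : 0 ≤ Real.sinh ((2 * j + 1 : ℕ) * r) := Real.sinh_nonneg_iff.mpr (by positivity)
  rw [Function.comp_apply, norm_mul, harg, sin_mul_I, norm_mul, norm_I, mul_one, ← ofReal_sinh,
    norm_real, Real.norm_of_nonneg hsinh]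

lemma Uram_eq (n : ℕ) (hq0 : q ≠ 0) (hq : ‖q‖ < 1) :
    Uram n q = (∑' j : ℕ, thetaCoeff q j * ((2 * j + 1 : ℕ) : ℂ) ^ (2 * n + 1)) /
      (eulerProd q * quadProd q 2) := by
  rw [Uram, ← (hasSum_thetaCoeff_mul_odd hq0 hq).tsum_eq]
  simp only [thetaCoeff_natCast, mul_right_comm]

theorem hasSum_Uram_mul_pow (hq0 : q ≠ 0) (hq : ‖q‖ < 1) (x : ℂ) :
    HasSum (fun n : ℕ => (-1) ^ n * Uram n q * x ^ (2 * n + 1) / ((2 * n + 1).factorial : ℂ))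
      (sin x * quadProd q (2 * cos (2 * x)) / quadProd q 2) := by
  have hsin (z : ℂ) : HasSum (fun n : ℕ => (-1) ^ n / ((2 * n + 1).factorial : ℂ) *
      z ^ (2 * n + 1)) (sin z) := by
    simpa only [div_mul_eq_mul_div] using Complex.hasSum_sin z
  have hsinh (r : ℝ) : HasSum (fun n : ℕ => ‖(-1 : ℂ) ^ n / ((2 * n + 1).factorial : ℂ)‖ *
      r ^ (2 * n + 1)) (Real.sinh r) := by
    simpa [div_eq_inv_mul] using Real.hasSum_sinh r
  have hnum := hasSum_tsum_mul_comp_mul hsin hsinh (c := fun j : ℕ => thetaCoeff q j)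
    (l := fun j : ℕ => ((2 * j + 1 : ℕ) : ℂ)) (x := x)
    (by simpa only [Complex.norm_natCast] using
      summable_norm_thetaCoeff_mul_sinh hq0 hq (norm_nonneg x))
  rw [(hasSum_thetaCoeff_mul_sin hq0 hq x).tsum_eq] at hnum
  have h := hnum.div_const (eulerProd q * quadProd q 2)
  rw [mul_div_mul_left _ _ (eulerProd_ne_zero hq)] at h
  refine h.congr_fun fun n => ?_
  rw [Uram_eq n hq0 hq]
  ring

end ThetaQuotient

section Sine

/-- The logarithm of `sin (πz) / (πz)` for `‖z‖ < 1`, as the double series obtained by expanding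
the logarithm of every factor of Euler's product `∏ (1 - z² / j²)`. -/
def logSinc (z : ℂ) : ℂ :=
  -∑' p : ℕ × ℕ, (z ^ 2 / ((p.1 : ℂ) + 1) ^ 2) ^ (p.2 + 1) / (p.2 + 1)

lemma norm_sq_div_succ_sq (z : ℂ) (j : ℕ) :
    ‖z ^ 2 / ((j : ℂ) + 1) ^ 2‖ = ‖z‖ ^ 2 * (1 / ((j + 1 : ℕ) : ℝ) ^ 2) := by
  rw [norm_div, norm_pow, norm_pow, ← Nat.cast_succ, Complex.norm_natCast, mul_one_div]

lemma summable_norm_sq_div_succ_sq (z : ℂ) :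
    Summable fun j : ℕ => ‖z ^ 2 / ((j : ℂ) + 1) ^ 2‖ := by
  simp only [norm_sq_div_succ_sq]
  exact ((summable_nat_add_iff 1).mpr (Real.summable_one_div_nat_pow.mpr one_lt_two)).mul_left _

lemma norm_sq_div_succ_sq_lt_one {z : ℂ} (hz : ‖z‖ < 1) (j : ℕ) :
    ‖z ^ 2 / ((j : ℂ) + 1) ^ 2‖ < 1 := by
  have hj : (1 : ℝ) ≤ ((j + 1 : ℕ) : ℝ) ^ 2 := one_le_pow₀ (by exact_mod_cast j.succ_pos)
  rw [norm_sq_div_succ_sq, mul_one_div]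
  exact (div_le_self (by positivity) hj).trans_lt (pow_lt_one₀ (norm_nonneg _) hz two_ne_zero)

lemma tsum_sq_div_succ_sq_pow_eq_bernoulli (z : ℂ) (m : ℕ) :
    -∑' j : ℕ, (z ^ 2 / ((j : ℂ) + 1) ^ 2) ^ (m + 1) / (m + 1) =
      ((bernoulli (2 * (m + 1)) : ℚ) : ℂ) * (2 * (π : ℂ) * I * z) ^ (2 * (m + 1)) /
        ((2 * (m + 1) : ℕ) * ((2 * (m + 1)).factorial : ℂ)) := by
  have hzeta := (hasSum_nat_add_iff' 1).mpr (hasSum_zeta_nat (k := m + 1) m.succ_ne_zero)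
  have hsum := (Complex.hasSum_ofReal.mpr hzeta).mul_left (-(z ^ (2 * (m + 1)) / (m + 1)))
  have hpow : (2 : ℂ) ^ (2 * (m + 1)) = 2 * 2 ^ (2 * (m + 1) - 1) := by rw [← pow_succ']; rfl
  have hI : I ^ (2 * (m + 1)) = (-1) ^ (m + 1) := by rw [pow_mul, I_sq]
  rw [← tsum_neg]
  refine (tsum_congr fun j => ?_).trans (hsum.tsum_eq.trans ?_)
  · push_cast
    rw [div_pow, ← pow_mul, ← pow_mul]
    ring
  · have hm : (m : ℂ) + 1 ≠ 0 := Nat.cast_add_one_ne_zero m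
    have hfact : ((2 * (m + 1)).factorial : ℂ) ≠ 0 := Nat.cast_ne_zero.mpr (Nat.factorial_ne_zero _)
    simp only [Finset.range_one, Finset.sum_singleton]
    push_cast
    rw [mul_pow, mul_pow, mul_pow, hI, hpow, zero_pow (by lia)]
    field_simp
    ring

lemma hasSum_logSinc {z : ℂ} (hz : ‖z‖ < 1) :
    HasSum (fun m : ℕ => ((bernoulli (2 * (m + 1)) : ℚ) : ℂ) *
      (2 * (π : ℂ) * I * z) ^ (2 * (m + 1)) /
        ((2 * (m + 1) : ℕ) * ((2 * (m + 1)).factorial : ℂ))) (logSinc z) := by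
  simp only [← tsum_sq_div_succ_sq_pow_eq_bernoulli]
  exact (hasSum_tsum_swap (summable_log_one_sub_series (summable_norm_sq_div_succ_sq z)
    (norm_sq_div_succ_sq_lt_one hz))).neg

lemma sin_pi_mul_eq {z : ℂ} (hz : ‖z‖ < 1) : sin (π * z) = π * z * exp (logSinc z) :=
  tendsto_nhds_unique (Complex.tendsto_euler_sin_prod z)
    ((hasProd_one_sub_exp_tsum (summable_norm_sq_div_succ_sq z)
      (norm_sq_div_succ_sq_lt_one hz)).tendsto_prod_nat.const_mul _)

lemma bernoulli_two_mul_succ_ne_zero (m : ℕ) : bernoulli (2 * (m + 1)) ≠ 0 := by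
  intro hB
  have hzeta := hasSum_zeta_nat (k := m + 1) m.succ_ne_zero
  rw [hB, Rat.cast_zero, mul_zero, zero_div] at hzeta
  have hle := le_hasSum hzeta 1 fun j _ => by positivity
  norm_num at hle

end Sine

section Lambert

variable {q X : ℂ}

/-- Minus the logarithm of `∏_{n≥1} (1 - qⁿe^X)(1 - qⁿe^{-X})` for `‖q‖ e^{‖X‖} < 1`, as the double
series obtained by expanding the logarithm of every factor. -/
def lambertCosh (q X : ℂ) : ℂ :=
  ∑' p : ℕ × ℕ, 2 * q ^ ((p.1 + 1) * (p.2 + 1)) / (p.2 + 1) * cosh ((p.2 + 1) * X)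

lemma norm_lt_one_of_mul_exp_norm_lt_one (hX : ‖q‖ * Real.exp ‖X‖ < 1) : ‖q‖ < 1 :=
  (le_mul_of_one_le_right (norm_nonneg q) (Real.one_le_exp (norm_nonneg X))).trans_lt hX

lemma norm_pow_succ_mul_exp_lt_one (hX : ‖q‖ * Real.exp ‖X‖ < 1) (n : ℕ) :
    ‖q ^ (n + 1) * exp X‖ < 1 := by
  have hq := norm_lt_one_of_mul_exp_norm_lt_one hX
  refine lt_of_le_of_lt ?_ hX
  rw [norm_mul, norm_pow]
  gcongr
  · exact pow_le_of_le_one (norm_nonneg q) hq.le n.succ_ne_zero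
  · exact Complex.norm_exp_le_exp_norm X

lemma summable_norm_pow_succ_mul_exp (hq : ‖q‖ < 1) (X : ℂ) :
    Summable fun n : ℕ => ‖q ^ (n + 1) * exp X‖ := by
  simpa only [norm_mul] using (summable_norm_pow_succ hq).mul_right ‖exp X‖

lemma pow_mul_exp_pow_div_add (q X : ℂ) (p : ℕ × ℕ) :
    (q ^ (p.1 + 1) * exp X) ^ (p.2 + 1) / (p.2 + 1) +
        (q ^ (p.1 + 1) * exp (-X)) ^ (p.2 + 1) / (p.2 + 1) =
      2 * q ^ ((p.1 + 1) * (p.2 + 1)) / (p.2 + 1) * cosh ((p.2 + 1) * X) := by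
  have hexp (Y : ℂ) : exp Y ^ (p.2 + 1) = exp ((p.2 + 1) * Y) := by
    rw [← Complex.exp_nat_mul, Nat.cast_succ]
  rw [mul_pow, mul_pow, hexp, hexp, ← pow_mul, mul_neg, Complex.cosh]
  ring

lemma summable_log_pow_succ_mul_exp (hX : ‖q‖ * Real.exp ‖X‖ < 1) :
    Summable fun p : ℕ × ℕ => (q ^ (p.1 + 1) * exp X) ^ (p.2 + 1) / (p.2 + 1) :=
  summable_log_one_sub_series (u := fun n : ℕ => q ^ (n + 1) * exp X)
    (summable_norm_pow_succ_mul_exp (norm_lt_one_of_mul_exp_norm_lt_one hX) X)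
    (norm_pow_succ_mul_exp_lt_one hX)

lemma hasSum_lambertCosh (hX : ‖q‖ * Real.exp ‖X‖ < 1) :
    HasSum (fun p : ℕ × ℕ => 2 * q ^ ((p.1 + 1) * (p.2 + 1)) / (p.2 + 1) * cosh ((p.2 + 1) * X))
      (lambertCosh q X) := by
  have hX' : ‖q‖ * Real.exp ‖-X‖ < 1 := by rwa [norm_neg]
  exact (((summable_log_pow_succ_mul_exp hX).add (summable_log_pow_succ_mul_exp hX')).congr
    (pow_mul_exp_pow_div_add q X)).hasSum

lemma quadProd_two_mul_cosh (hX : ‖q‖ * Real.exp ‖X‖ < 1) :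
    quadProd q (2 * cosh X) = exp (-lambertCosh q X) := by
  have hq := norm_lt_one_of_mul_exp_norm_lt_one hX
  have hX' : ‖q‖ * Real.exp ‖-X‖ < 1 := by rwa [norm_neg]
  have hprod := (hasProd_one_sub_exp_tsum (summable_norm_pow_succ_mul_exp hq X)
      (norm_pow_succ_mul_exp_lt_one hX)).mul
    (hasProd_one_sub_exp_tsum (summable_norm_pow_succ_mul_exp hq (-X))
      (norm_pow_succ_mul_exp_lt_one hX'))
  rw [← Complex.exp_add, ← neg_add, ← (summable_log_pow_succ_mul_exp hX).tsum_add
    (summable_log_pow_succ_mul_exp hX'), tsum_congr (pow_mul_exp_pow_div_add q X)] at hprod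
  refine (hprod.congr_fun fun n => ?_).tprod_eq
  have hXne := Complex.exp_ne_zero X
  rw [Complex.cosh, Complex.exp_neg]
  field_simp
  ring

lemma quadProd_two (hq : ‖q‖ < 1) : quadProd q 2 = exp (-lambertCosh q 0) := by
  simpa using quadProd_two_mul_cosh (q := q) (X := 0) (by simpa using hq)

lemma tsum_prod_pow_mul_eq_tsum_sigma (hq : ‖q‖ < 1) (k : ℕ) :
    ∑' p : ℕ × ℕ, ((p.2 : ℂ) + 1) ^ k * q ^ ((p.1 + 1) * (p.2 + 1)) =
      ∑' n : ℕ, ((ArithmeticFunction.sigma k) (n + 1) : ℂ) * q ^ (n + 1) := by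
  have hsigma := tsum_prod_pow_eq_tsum_sigma k hq
  rw [← (summable_prod_mul_pow k hq).tsum_prod,
    tsum_pnat_eq_tsum_succ (f := fun n : ℕ => ((ArithmeticFunction.sigma k) n : ℂ) * q ^ n)]
    at hsigma
  rw [← hsigma, ← (Equiv.pnatEquivNat.symm.prodCongr Equiv.pnatEquivNat.symm).tsum_eq]
  exact tsum_congr fun p => by simp

lemma hasSum_lambertCosh_powerSeries (hX : ‖q‖ * Real.exp ‖X‖ < 1) :
    HasSum (fun k : ℕ => 1 / ((2 * k).factorial : ℂ) *
        (∑' p : ℕ × ℕ, 2 * q ^ ((p.1 + 1) * (p.2 + 1)) / (p.2 + 1) * (p.2 + 1) ^ (2 * k)) *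
          X ^ (2 * k))
      (lambertCosh q X) := by
  have hcosh (z : ℂ) : HasSum (fun k : ℕ => 1 / ((2 * k).factorial : ℂ) * z ^ (2 * k))
      (cosh z) := by
    simpa only [one_div_mul_eq_div] using Complex.hasSum_cosh z
  have hcosh_norm (r : ℝ) : HasSum (fun k : ℕ => ‖1 / ((2 * k).factorial : ℂ)‖ * r ^ (2 * k))
      (Real.cosh r) := by
    simpa [div_eq_inv_mul] using Real.hasSum_cosh r
  have hmajorant := (hasSum_lambertCosh (q := (‖q‖ : ℂ)) (X := (‖X‖ : ℂ))
    (by simpa using hX)).summable.norm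
  have h := hasSum_tsum_mul_comp_mul hcosh hcosh_norm
    (c := fun p : ℕ × ℕ => 2 * q ^ ((p.1 + 1) * (p.2 + 1)) / (p.2 + 1))
    (l := fun p : ℕ × ℕ => ((p.2 + 1 : ℕ) : ℂ)) (x := X) <| by
      refine hmajorant.congr fun p => ?_
      rw [norm_mul, ← Nat.cast_succ, Complex.norm_natCast, ← Complex.ofReal_natCast,
        ← Complex.ofReal_mul, ← Complex.ofReal_cosh, Complex.norm_real,
        Real.norm_of_nonneg (Real.cosh_pos _).le]
      simp
  simpa only [lambertCosh, Nat.cast_succ] using h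

lemma hasSum_lambertCosh_sub (hX : ‖q‖ * Real.exp ‖X‖ < 1) :
    HasSum (fun k : ℕ => 2 * X ^ (2 * (k + 1)) / ((2 * (k + 1)).factorial : ℂ) *
        ∑' n : ℕ, ((ArithmeticFunction.sigma (2 * (k + 1) - 1)) (n + 1) : ℂ) * q ^ (n + 1))
      (lambertCosh q X - lambertCosh q 0) := by
  have hq := norm_lt_one_of_mul_exp_norm_lt_one hX
  have hshift := (hasSum_nat_add_iff' 1).mpr (hasSum_lambertCosh_powerSeries hX)
  have hconst : lambertCosh q 0 =
      ∑' p : ℕ × ℕ, 2 * q ^ ((p.1 + 1) * (p.2 + 1)) / ((p.2 : ℂ) + 1) := by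
    simp [lambertCosh]
  simp only [Finset.range_one, Finset.sum_singleton, mul_zero, pow_zero, mul_one,
    Nat.factorial_zero, Nat.cast_one, div_one, one_mul, ← hconst] at hshift
  refine hshift.congr_fun fun k => ?_
  rw [← tsum_prod_pow_mul_eq_tsum_sigma hq, mul_right_comm, ← tsum_mul_left, ← tsum_mul_left]
  refine tsum_congr fun p => ?_
  have hp : (p.2 : ℂ) + 1 ≠ 0 := Nat.cast_add_one_ne_zero p.2
  rw [show 2 * (k + 1) - 1 = 2 * k + 1 by lia]
  field_simp
  ring

end Lambert

section Eisenstein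

lemma hasSum_bernoulli_mul_Eser {τ z : ℂ} (hz : ‖z‖ < 1)
    (hX : ‖qq τ‖ * Real.exp ‖2 * (π : ℂ) * I * z‖ < 1) :
    HasSum (fun n : ℕ => ((bernoulli (2 * (n + 1)) : ℚ) : ℂ) * Eser (n + 1) τ *
        (2 * (π : ℂ) * I * z) ^ (2 * (n + 1)) /
          ((2 * (n + 1) : ℕ) * ((2 * (n + 1)).factorial : ℂ)))
      (logSinc z -
        (lambertCosh (qq τ) (2 * (π : ℂ) * I * z) - lambertCosh (qq τ) 0)) := by
  refine ((hasSum_logSinc hz).sub (hasSum_lambertCosh_sub hX)).congr_fun fun n => ?_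
  have hB : ((bernoulli (2 * (n + 1)) : ℚ) : ℂ) ≠ 0 := by
    exact_mod_cast bernoulli_two_mul_succ_ne_zero n
  have hn : (n : ℂ) + 1 ≠ 0 := Nat.cast_add_one_ne_zero n
  have hfact : ((2 * (n + 1)).factorial : ℂ) ≠ 0 := Nat.cast_ne_zero.mpr (Nat.factorial_ne_zero _)
  rw [Eser]
  push_cast
  field_simp
  ring

lemma sin_mul_quadProd_div_quadProd_eq_exp {q z : ℂ} (hz : ‖z‖ < 1)
    (hX : ‖q‖ * Real.exp ‖2 * (π : ℂ) * I * z‖ < 1) :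
    sin (π * z) * quadProd q (2 * cos (2 * (π * z))) / quadProd q 2 =
      π * z * exp (logSinc z -
        (lambertCosh q (2 * (π : ℂ) * I * z) - lambertCosh q 0)) := by
  have hcos : cos (2 * (π * z)) = cosh (2 * (π : ℂ) * I * z) := by
    rw [← Complex.cosh_mul_I]
    ring_nf
  rw [hcos, quadProd_two_mul_cosh hX, quadProd_two (norm_lt_one_of_mul_exp_norm_lt_one hX),
    sin_pi_mul_eq hz, mul_assoc, mul_div_assoc, mul_div_assoc, ← Complex.exp_sub,
    ← Complex.exp_add]
  ring_nf

lemma eventually_mul_exp_norm_lt_one {r : ℝ} (hr : r < 1) (c : ℂ) :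
    ∀ᶠ z : ℂ in nhds 0, r * Real.exp ‖c * z‖ < 1 := by
  have hcont : Continuous fun z : ℂ => r * Real.exp ‖c * z‖ := by fun_prop
  exact hcont.continuousAt.eventually_lt_const (by simpa using hr)

end Eisenstein

/-- For every `τ ∈ ℍ` and every `z` in a sufficiently small neighborhood
of `0`,
`∑_{n≥0} (−1)^n U_{2n}(q) (πz)^{2n+1}/(2n+1)! = πz·exp(∑_{n≥1} B_{2n}E_{2n}(τ)(2πiz)^{2n}/(2n·(2n)!))`. -/
theorem U_generating_function_exp
    (τ : ℂ) (hτ : 0 < τ.im) :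
    ∃ ε > 0, ∀ z : ℂ, ‖z‖ < ε →
      HasSum (fun n : ℕ =>
          (-1 : ℂ) ^ n * Uram n (qq τ) * ((π : ℂ) * z) ^ (2 * n + 1) /
            (Nat.factorial (2 * n + 1) : ℂ))
        ((π : ℂ) * z * Complex.exp (∑' n : ℕ,
          ((bernoulli (2 * (n + 1)) : ℚ) : ℂ) * Eser (n + 1) τ *
            (2 * (π : ℂ) * Complex.I * z) ^ (2 * (n + 1)) /
            ((2 * (n + 1) : ℕ) * (Nat.factorial (2 * (n + 1)) : ℂ)))) := by
  have hq0 : qq τ ≠ 0 := Complex.exp_ne_zero _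
  have hq : ‖qq τ‖ < 1 := UpperHalfPlane.norm_exp_two_pi_I_lt_one ⟨τ, hτ⟩
  obtain ⟨δ, hδ, hδX⟩ := Metric.eventually_nhds_iff.mp
    (eventually_mul_exp_norm_lt_one hq (2 * π * I))
  refine ⟨min 1 δ, lt_min one_pos hδ, fun z hz => ?_⟩
  have hz1 : ‖z‖ < 1 := hz.trans_le (min_le_left _ _)
  have hX : ‖qq τ‖ * Real.exp ‖2 * (π : ℂ) * I * z‖ < 1 :=
    hδX (by simpa using hz.trans_le (min_le_right _ _))
  rw [(hasSum_bernoulli_mul_Eser hz1 hX).tsum_eq, ← sin_mul_quadProd_div_quadProd_eq_exp hz1 hX]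
  exact hasSum_Uram_mul_pow hq0 hq (π * z)
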